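/- For every Λ > 0 there exists a constant C > 0, depending only on φ and Λ, with the following property. Let r > 0 and let x₁, x₂ ∈ ℝ⁴ with |x₁−x₂| ≤ r/4; suppose u is harmonic on an open set containing the closed ball B̄_{x₁}(6r); suppose that for i = 1,2 one has H_φ(x_i,t) > 0 and N_φ(x_i,t) ≤ Λ for all t ∈ (0, 4r]; and suppose H_φ(x',r) > 0 for every x' on the segment from x₁ to x₂. Then |N_φ(x₁,r) − N_φ(x₂,r)| ≤ C·(√(W_{r/4}^{4r}(x₁)) + √(W_{r/4}^{4r}(x₂))). -/

import Mathlib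

open Metric MeasureTheory
open scoped RealInnerProductSpace

noncomputable section

abbrev E4 := EuclideanSpace ℝ (Fin 4)

variable {E : Type*} [NormedAddCommGroup E] [InnerProductSpace ℝ E] [FiniteDimensional ℝ E]

/-- `u` is smooth and harmonic (the Laplacian, i.e. the sum of the pure second
derivatives in the coordinate directions, vanishes) on `Ω`. -/
def IsHarmonicOn (u : E4 → E) (Ω : Set E4) : Prop :=
  ContDiffOn ℝ (⊤ : ℕ∞) u Ω ∧
  ∀ x ∈ Ω, ∑ i : Fin 4,
    iteratedFDeriv ℝ 2 u x ![EuclideanSpace.single i (1:ℝ), EuclideanSpace.single i 1] = 0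

/-- `|∇u(y)|²`, the squared Frobenius norm of the derivative of `u` at `y`. -/
def gradSq (u : E4 → E) (y : E4) : ℝ :=
  ∑ i : Fin 4, ‖fderiv ℝ u y (EuclideanSpace.single i (1:ℝ))‖ ^ 2

/-- `D_φ(x,r) = ∫ |∇u(y)|² φ(|y−x|/r) dy`. -/
def Dphi (φ : ℝ → ℝ) (u : E4 → E) (x : E4) (r : ℝ) : ℝ :=
  ∫ y, gradSq u y * φ (‖y - x‖ / r)

/-- `H_φ(x,r) = −∫ |u(y)|² |y−x|⁻¹ φ'(|y−x|/r) dy`. -/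
def Hphi (φ : ℝ → ℝ) (u : E4 → E) (x : E4) (r : ℝ) : ℝ :=
  -∫ y, ‖u y‖ ^ 2 * ‖y - x‖⁻¹ * deriv φ (‖y - x‖ / r)

/-- `E_φ(x,r) = −∫ |∂_{ν_x}u(y)|² |y−x| φ'(|y−x|/r) dy`, where `ν_x(y) = (y−x)/|y−x|`. -/
def Ephi (φ : ℝ → ℝ) (u : E4 → E) (x : E4) (r : ℝ) : ℝ :=
  -∫ y, ‖fderiv ℝ u y (‖y - x‖⁻¹ • (y - x))‖ ^ 2 * ‖y - x‖ * deriv φ (‖y - x‖ / r)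

/-- The smoothed frequency `N_φ(x,r) = r D_φ(x,r) / H_φ(x,r)`. -/
def Nphi (φ : ℝ → ℝ) (u : E4 → E) (x : E4) (r : ℝ) : ℝ :=
  r * Dphi φ u x r / Hphi φ u x r

set_option linter.unusedSectionVars false

/-! ### Coordinate derivatives -/

/-- the coordinate vector -/
abbrev ev (i : Fin 4) : E4 := EuclideanSpace.single i (1:ℝ)

/-- the partial derivative -/
def pd (i : Fin 4) (u : E4 → E) (y : E4) : E := fderiv ℝ u y (ev i)

/-- the derivative along `y - x` -/
def rad (x : E4) (u : E4 → E) (y : E4) : E := fderiv ℝ u y (y - x)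

/-- the coordinate Laplacian -/
def lap (u : E4 → E) (y : E4) : E := ∑ i, pd i (pd i u) y

lemma vec_sum (v : E4) : v = ∑ i, v i • ev i := by
  ext j
  simp [Finset.sum_apply, Pi.single_apply]

lemma fderiv_sum_pd (u : E4 → E) (y v : E4) : fderiv ℝ u y v = ∑ i, v i • pd i u y := by
  conv_lhs => rw [vec_sum v]
  simp [pd, map_sum]

lemma rad_eq (x : E4) (u : E4 → E) (y : E4) : rad x u y = ∑ i, (y i - x i) • pd i u y := by
  rw [rad, fderiv_sum_pd]; rfl

lemma pd_smooth {u : E4 → E} (hu : ContDiff ℝ (⊤ : ℕ∞) u) (i : Fin 4) :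
    ContDiff ℝ (⊤ : ℕ∞) (pd i u) :=
  (hu.fderiv_right (by simp)).clm_apply contDiff_const

lemma rad_smooth {u : E4 → E} (hu : ContDiff ℝ (⊤ : ℕ∞) u) (x : E4) :
    ContDiff ℝ (⊤ : ℕ∞) (rad x u) :=
  (hu.fderiv_right (by simp)).clm_apply (contDiff_id.sub contDiff_const)

lemma smooth_diff {u : E4 → E} (hu : ContDiff ℝ (⊤ : ℕ∞) u) : Differentiable ℝ u :=
  hu.differentiable (by simp)

lemma pd_comm {u : E4 → E} (hu : ContDiff ℝ (⊤ : ℕ∞) u) (i j : Fin 4) (y : E4) :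
    pd i (pd j u) y = pd j (pd i u) y := by
  have h2 : DifferentiableAt ℝ (fderiv ℝ u) y :=
    ((hu.fderiv_right (m := (⊤ : ℕ∞)) (by simp)).differentiable (by simp)) y
  have hs : IsSymmSndFDerivAt ℝ u y := hu.contDiffAt.isSymmSndFDerivAt
    (by simp only [minSmoothness_of_isRCLikeNormedField]; exact WithTop.coe_le_coe.2 (le_top : (2 : ℕ∞) ≤ ⊤))
  have key : ∀ a b : Fin 4, pd a (pd b u) y = fderiv ℝ (fderiv ℝ u) y (ev a) (ev b) := by
    intro a b
    have : pd b u = fun z => fderiv ℝ u z (ev b) := rfl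
    rw [pd, this, fderiv_clm_apply h2 (differentiableAt_const _)]
    simp
  rw [key, key]; exact hs _ _

lemma lap_eq_iter {u : E4 → E} (hu : ContDiff ℝ (⊤ : ℕ∞) u) (y : E4) :
    lap u y = ∑ i : Fin 4,
    iteratedFDeriv ℝ 2 u y ![EuclideanSpace.single i (1:ℝ), EuclideanSpace.single i 1] := by
  have h2 : DifferentiableAt ℝ (fderiv ℝ u) y :=
    ((hu.fderiv_right (m := (⊤ : ℕ∞)) (by simp)).differentiable (by simp)) y
  unfold lap
  refine Finset.sum_congr rfl fun i _ => ?_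
  have : pd i u = fun z => fderiv ℝ u z (ev i) := rfl
  rw [pd, this, fderiv_clm_apply h2 (differentiableAt_const _), iteratedFDeriv_two_apply]
  simp

lemma pd_add {f g : E4 → E} (hf : Differentiable ℝ f) (hg : Differentiable ℝ g) (i : Fin 4)
    (y : E4) : pd i (fun y => f y + g y) y = pd i f y + pd i g y := by
  simp only [pd]
  rw [fderiv_fun_add (hf y) (hg y)]; rfl

lemma pd_sub {f g : E4 → E} (hf : Differentiable ℝ f) (hg : Differentiable ℝ g) (i : Fin 4)
    (y : E4) : pd i (fun y => f y - g y) y = pd i f y - pd i g y := by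
  simp only [pd]
  rw [fderiv_fun_sub (hf y) (hg y)]; rfl

lemma pd_const_smul {f : E4 → E} (hf : Differentiable ℝ f) (c : ℝ) (i : Fin 4)
    (y : E4) : pd i (fun y => c • f y) y = c • pd i f y := by
  simp only [pd]
  rw [fderiv_fun_const_smul (hf y)]; rfl

lemma hasFDerivAt_coord (x y : E4) (j : Fin 4) :
    HasFDerivAt (fun z : E4 => z j - x j) (EuclideanSpace.proj j : E4 →L[ℝ] ℝ) y :=
  ((EuclideanSpace.proj j : E4 →L[ℝ] ℝ).hasFDerivAt).sub_const _

lemma pd_coord_smul {f : E4 → E} (hf : Differentiable ℝ f) (x : E4) (i j : Fin 4)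
    (y : E4) : pd i (fun y => (y j - x j) • f y) y =
      (y j - x j) • pd i f y + (if i = j then f y else 0) := by
  simp only [pd]
  rw [((hasFDerivAt_coord x y j).fun_smul (hf y).hasFDerivAt).fderiv]
  by_cases h : i = j
  · subst h; simp
  · simp [h, Ne.symm h]

lemma pd_sum {f : Fin 4 → E4 → E} (hf : ∀ j, Differentiable ℝ (f j)) (i : Fin 4)
    (y : E4) : pd i (fun y => ∑ j, f j y) y = ∑ j, pd i (f j) y := by
  simp only [pd]
  rw [fderiv_fun_sum (fun j _ => hf j y)]; simp

lemma coord_diff (x : E4) (j : Fin 4) : Differentiable ℝ (fun z : E4 => z j - x j) :=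
  fun y => (hasFDerivAt_coord x y j).differentiableAt

lemma pd_rad {u : E4 → E} (hu : ContDiff ℝ (⊤ : ℕ∞) u) (x : E4) (i : Fin 4) (y : E4) :
    pd i (rad x u) y = pd i u y + ∑ j, (y j - x j) • pd i (pd j u) y := by
  have hd : ∀ j, Differentiable ℝ (pd j u) := fun j => smooth_diff (pd_smooth hu j)
  have : rad x u = fun y => ∑ j, (y j - x j) • pd j u y := funext (rad_eq x u)
  rw [this, pd_sum (fun j => (coord_diff x j).fun_smul (hd j))]
  simp only [pd_coord_smul (hd _), Finset.sum_add_distrib]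
  simp [add_comm]

lemma pd_rad' {u : E4 → E} (hu : ContDiff ℝ (⊤ : ℕ∞) u) (x : E4) (i : Fin 4) (y : E4) :
    pd i (rad x u) y = pd i u y + rad x (pd i u) y := by
  rw [pd_rad hu, rad_eq]
  congr 1
  exact Finset.sum_congr rfl fun j _ => by rw [pd_comm hu]

lemma lap_rad {u : E4 → E} (hu : ContDiff ℝ (⊤ : ℕ∞) u) (x : E4) (y : E4) :
    lap (rad x u) y = (2:ℝ) • lap u y + rad x (lap u) y := by
  have hd : ∀ j, Differentiable ℝ (pd j u) := fun j => smooth_diff (pd_smooth hu j)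
  have h1 : ∀ i, pd i (pd i (rad x u)) y = (2:ℝ) • pd i (pd i u) y + rad x (pd i (pd i u)) y := by
    intro i
    have : pd i (rad x u) = fun y => pd i u y + rad x (pd i u) y := funext (pd_rad' hu x i)
    rw [this, pd_add (hd i) (smooth_diff (rad_smooth (pd_smooth hu i) x)), pd_rad' (pd_smooth hu i),
      two_smul, add_assoc]
  have h2 : rad x (lap u) y = ∑ i, rad x (pd i (pd i u)) y := by
    have : lap u = fun y => ∑ i, pd i (pd i u) y := rfl
    rw [rad, this, fderiv_fun_sum (fun j _ => (smooth_diff (pd_smooth (pd_smooth hu j) j)) y)]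
    simp [rad]
  rw [h2, lap]
  simp only [h1, Finset.sum_add_distrib, lap, Finset.smul_sum]

lemma lap_w {u : E4 → E} (hu : ContDiff ℝ (⊤ : ℕ∞) u) {U : Set E4} (hU : IsOpen U)
    (h0 : ∀ y ∈ U, lap u y = 0) (x : E4) (c : ℝ) :
    ∀ y ∈ U, lap (fun y => rad x u y - c • u y) y = 0 := by
  intro y hy
  have hd : ∀ j, Differentiable ℝ (pd j u) := fun j => smooth_diff (pd_smooth hu j)
  have hr := rad_smooth hu x
  have h1 : ∀ i, pd i (pd i (fun y => rad x u y - c • u y)) y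
      = pd i (pd i (rad x u)) y - c • pd i (pd i u) y := by
    intro i
    have : pd i (fun y => rad x u y - c • u y) = fun y => pd i (rad x u) y - c • pd i u y := by
      funext y
      rw [pd_sub (smooth_diff hr) ((smooth_diff hu).fun_const_smul c), pd_const_smul (smooth_diff hu)]
    rw [this, pd_sub (smooth_diff (pd_smooth hr i)) ((hd i).fun_const_smul c), pd_const_smul (hd i)]
  have h2 : lap (fun y => rad x u y - c • u y) y = lap (rad x u) y - c • lap u y := by
    simp only [lap, h1, Finset.sum_sub_distrib, Finset.smul_sum]
  have h3 : rad x (lap u) y = 0 := by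
    have : lap u =ᶠ[nhds y] fun _ => (0:E) := by
      filter_upwards [hU.mem_nhds hy] with z hz using h0 z hz
    rw [rad, this.fderiv_eq]; simp
  rw [h2, lap_rad hu, h0 y hy, h3]; simp

/-! ### Integration by parts -/

lemma ibp {g : Fin 4 → E4 → ℝ} (hg : ∀ i, ContDiff ℝ 1 (g i)) {Ψ κ : E4 → ℝ} {x : E4}
    (hΨ : ∀ y, HasFDerivAt Ψ (-(κ y) • innerSL ℝ (y - x)) y)
    (hκ : Continuous κ) (hΨc : HasCompactSupport Ψ) (hκc : HasCompactSupport κ) :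
    ∫ y, Ψ y * ∑ i, pd i (g i) y = ∫ y, κ y * ∑ i, (y i - x i) * g i y := by
  have hΨcont : Continuous Ψ := continuous_iff_continuousAt.2 fun y => (hΨ y).continuousAt
  have hpc : ∀ i, Continuous (pd i (g i)) := fun i =>
    ((hg i).continuous_fderiv (by simp)).clm_apply continuous_const
  have hco : ∀ i : Fin 4, Continuous fun y : E4 => y i - x i := fun i => (coord_diff x i).continuous
  have hgc : ∀ i, Continuous (g i) := fun i => (hg i).continuous
  have hf : ∀ i y, fderiv ℝ Ψ y (ev i) = -(κ y * (y i - x i)) := by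
    intro i y
    rw [(hΨ y).fderiv]
    simp [ev, EuclideanSpace.inner_single_right]
  have i1 : ∀ i, Integrable (fun y => Ψ y * pd i (g i) y) := fun i =>
    (hΨcont.mul (hpc i)).integrable_of_hasCompactSupport hΨc.mul_right
  have i2 : ∀ i, Integrable (fun y => κ y * ((y i - x i) * g i y)) := fun i =>
    (hκ.mul ((hco i).mul (hgc i))).integrable_of_hasCompactSupport hκc.mul_right
  have key : ∀ i, ∫ y, Ψ y * pd i (g i) y = ∫ y, κ y * ((y i - x i) * g i y) := by
    intro i
    have := integral_mul_fderiv_eq_neg_fderiv_mul_of_integrable (μ := (volume : Measure E4))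
      (f := Ψ) (g := g i) (v := ev i) ?_ (i1 i) ?_ ?_ ?_
    · simp only [pd]
      rw [this, ← integral_neg]
      congr 1; funext y; rw [hf]; ring
    · refine (i2 i).neg.congr (Filter.Eventually.of_forall fun y => ?_)
      simp only [hf, Pi.neg_apply]; ring
    · exact (hΨcont.mul (hgc i)).integrable_of_hasCompactSupport hΨc.mul_right
    · intro y _; exact (hΨ y).differentiableAt
    · intro y _; exact (hg i).differentiable (by simp) y
  simp only [Finset.mul_sum]
  rw [integral_finsetSum _ (fun i _ => i1 i), integral_finsetSum _ (fun i _ => i2 i)]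
  exact Finset.sum_congr rfl fun i _ => key i

lemma pd_inner {f g : E4 → E} (hf : Differentiable ℝ f) (hg : Differentiable ℝ g) (i : Fin 4)
    (y : E4) : pd i (fun y => ⟪f y, g y⟫) y = ⟪f y, pd i g y⟫ + ⟪pd i f y, g y⟫ := by
  simp only [pd]
  rw [fderiv_inner_apply ℝ (hf y) (hg y)]

/-- Green's identity with a radial weight. -/
lemma green {u h : E4 → E} (hu : ContDiff ℝ (⊤ : ℕ∞) u) (hh : ContDiff ℝ (⊤ : ℕ∞) h)
    {Ψ κ : E4 → ℝ} {x : E4}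
    (hΨ : ∀ y, HasFDerivAt Ψ (-(κ y) • innerSL ℝ (y - x)) y)
    (hκ : Continuous κ) (hΨc : HasCompactSupport Ψ) (hκc : HasCompactSupport κ)
    (h0 : ∀ y, Ψ y ≠ 0 → lap u y = 0) :
    ∫ y, Ψ y * ∑ i, ⟪pd i h y, pd i u y⟫ = ∫ y, κ y * ⟪h y, rad x u y⟫ := by
  have := ibp (g := fun i y => ⟪h y, pd i u y⟫)
    (fun i => ((hh.of_le (by simp)).inner ℝ ((pd_smooth hu i).of_le (by simp)))) hΨ hκ hΨc hκc
  convert this using 2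
  · funext y
    simp only [pd_inner (smooth_diff hh) (smooth_diff (pd_smooth hu _)), Finset.sum_add_distrib,
      ← inner_sum]
    by_cases hy : Ψ y = 0
    · simp [hy]
    · have := h0 y hy
      rw [lap] at this
      rw [this]; simp
  · funext y
    rw [rad_eq, inner_sum]
    simp [inner_smul_right]

/-! ### The weights -/

/-- the hypotheses on the cutoff -/
structure Cut (φ : ℝ → ℝ) : Prop where
  smooth : ContDiff ℝ (⊤ : ℕ∞) φ
  anti : Antitone φ
  one : ∀ t ≤ (3/4 : ℝ), φ t = 1
  zero : ∀ t, (1:ℝ) ≤ t → φ t = 0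

/-- `|y-x|⁻¹ (-φ'(|y-x|/t))` -/
def om (φ : ℝ → ℝ) (x : E4) (t : ℝ) (y : E4) : ℝ := -(‖y - x‖⁻¹ * deriv φ (‖y - x‖ / t))

/-- `φ(|y-x|/t)` -/
def Ph (φ : ℝ → ℝ) (x : E4) (t : ℝ) (y : E4) : ℝ := φ (‖y - x‖ / t)

/-- primitive of `Ph` -/
def Ps (φ : ℝ → ℝ) (x : E4) (t : ℝ) (y : E4) : ℝ :=
  t ^ 2 / 2 * ∫ q in (‖y - x‖ ^ 2 / t ^ 2)..1, φ (Real.sqrt q)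

lemma nsq_deriv (x y : E4) :
    HasFDerivAt (fun y : E4 => ‖y - x‖ ^ 2) ((2:ℝ) • innerSL ℝ (y - x)) y := by
  have := ((hasFDerivAt_id y).sub_const x).norm_sq
  refine this.congr_fderiv (ContinuousLinearMap.ext fun v => ?_)
  simp

namespace Cut
variable {φ : ℝ → ℝ} (hφ : Cut φ)
include hφ

lemma cont_deriv : Continuous (deriv φ) := hφ.smooth.continuous_deriv (by simp)

lemma diff : Differentiable ℝ φ := hφ.smooth.differentiable (by simp)

lemma d_lt {s : ℝ} (hs : s < 3/4) : deriv φ s = 0 := by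
  have : φ =ᶠ[nhds s] fun _ => (1:ℝ) := by
    filter_upwards [Iio_mem_nhds hs] with z hz using hφ.one z (le_of_lt hz)
  rw [this.deriv_eq]; simp

lemma d_gt {s : ℝ} (hs : 1 < s) : deriv φ s = 0 := by
  have : φ =ᶠ[nhds s] fun _ => (0:ℝ) := by
    filter_upwards [Ioi_mem_nhds hs] with z hz using hφ.zero z (le_of_lt hz)
  rw [this.deriv_eq]; simp

lemma d_nonpos (s : ℝ) : deriv φ s ≤ 0 := hφ.anti.deriv_nonpos

lemma nonneg (s : ℝ) : 0 ≤ φ s := by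
  rcases le_total s 1 with h | h
  · calc (0:ℝ) = φ 1 := (hφ.zero 1 le_rfl).symm
      _ ≤ φ s := hφ.anti h
  · rw [hφ.zero s h]

lemma exists_bound : ∃ M > (0:ℝ), ∀ s, -deriv φ s ≤ M := by
  obtain ⟨C, hC⟩ := (isCompact_Icc (a := (3/4:ℝ)) (b := 1)).exists_bound_of_continuousOn
    hφ.cont_deriv.continuousOn
  refine ⟨max C 1, by positivity, fun s => ?_⟩
  by_cases h1 : s < 3/4
  · rw [hφ.d_lt h1]; simp
  by_cases h2 : 1 < s
  · rw [hφ.d_gt h2]; simp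
  have := hC s ⟨not_lt.1 h1, not_lt.1 h2⟩
  rw [Real.norm_eq_abs] at this
  exact (neg_le_abs _).trans (this.trans (le_max_left _ _))

lemma om_nonneg (x : E4) (t : ℝ) (y : E4) : 0 ≤ om φ x t y := by
  have := hφ.d_nonpos (‖y - x‖ / t)
  have h2 : 0 ≤ ‖y - x‖⁻¹ := by positivity
  unfold om; nlinarith

lemma om_supp {x : E4} {t : ℝ} (ht : 0 < t) {y : E4} (h : om φ x t y ≠ 0) :
    3/4 * t ≤ ‖y - x‖ ∧ ‖y - x‖ ≤ t := by
  constructor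
  · by_contra! hc
    exact h (by rw [om, hφ.d_lt ((div_lt_iff₀ ht).2 hc)]; simp)
  · by_contra! hc
    exact h (by rw [om, hφ.d_gt ((one_lt_div ht).2 hc)]; simp)

lemma om_cont (x : E4) {t : ℝ} (ht : 0 < t) : Continuous (om φ x t) := by
  rw [continuous_iff_continuousAt]
  intro y
  by_cases hy : y = x
  · have : om φ x t =ᶠ[nhds y] fun _ => (0:ℝ) := by
      filter_upwards [ball_mem_nhds y (show 0 < 3/4 * t by positivity)] with z hz
      by_contra hc
      have := (hφ.om_supp ht hc).1
      rw [mem_ball, hy, dist_eq_norm] at hz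
      linarith
    exact continuousAt_const.congr this.symm
  · have h1 : ContinuousAt (fun y : E4 => ‖y - x‖⁻¹) y :=
      ContinuousAt.inv₀ (by fun_prop) (by simpa [sub_eq_zero] using hy)
    have h2 : Continuous (fun y : E4 => deriv φ (‖y - x‖ / t)) :=
      hφ.cont_deriv.comp (by fun_prop)
    exact (h1.mul h2.continuousAt).neg

lemma om_compact (x : E4) {t : ℝ} (ht : 0 < t) : HasCompactSupport (om φ x t) :=
  HasCompactSupport.intro (isCompact_closedBall x t) fun y hy => by
    by_contra hc
    exact hy (by rw [mem_closedBall, dist_eq_norm]; exact (hφ.om_supp ht hc).2)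

lemma Ph_supp {x : E4} {t : ℝ} (ht : 0 < t) {y : E4} (h : Ph φ x t y ≠ 0) :
    ‖y - x‖ < t := by
  by_contra! hc
  exact h (hφ.zero _ ((one_le_div ht).2 hc))

lemma Ph_compact (x : E4) {t : ℝ} (ht : 0 < t) : HasCompactSupport (Ph φ x t) :=
  HasCompactSupport.intro (isCompact_closedBall x t) fun y hy => by
    by_contra hc
    exact hy (by rw [mem_closedBall, dist_eq_norm]; exact (hφ.Ph_supp ht hc).le)

lemma Ph_cont (x : E4) (t : ℝ) : Continuous (Ph φ x t) :=
  hφ.diff.continuous.comp (by fun_prop)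

lemma Ph_nonneg (x : E4) (t : ℝ) (y : E4) : 0 ≤ Ph φ x t y := hφ.nonneg _

lemma Ph_deriv (x : E4) {t : ℝ} (ht : 0 < t) (y : E4) :
    HasFDerivAt (Ph φ x t) (-(om φ x t y / t) • innerSL ℝ (y - x)) y := by
  by_cases hy : y = x
  · subst hy
    have : Ph φ y t =ᶠ[nhds y] fun _ => (1:ℝ) := by
      filter_upwards [ball_mem_nhds y (show 0 < 3/4 * t by positivity)] with z hz
      rw [mem_ball, dist_eq_norm] at hz
      exact hφ.one _ ((div_le_iff₀ ht).2 hz.le)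
    simpa using (hasFDerivAt_const (1:ℝ) y).congr_of_eventuallyEq this
  · have hne : ‖y - x‖ ≠ 0 := by simpa [sub_eq_zero] using hy
    have h1 := nsq_deriv x y
    have h2 : HasFDerivAt (fun y : E4 => ‖y - x‖)
        ((1 / (2 * ‖y - x‖)) • ((2:ℝ) • innerSL ℝ (y - x))) y := by
      have := h1.sqrt (by positivity)
      simpa [Real.sqrt_sq] using this
    have h3 : HasFDerivAt (fun y : E4 => ‖y - x‖ / t)
        (t⁻¹ • ((1 / (2 * ‖y - x‖)) • ((2:ℝ) • innerSL ℝ (y - x)))) y := by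
      have := h2.const_smul t⁻¹
      refine this.congr_of_eventuallyEq (Filter.Eventually.of_forall fun z => ?_)
      simp [div_eq_inv_mul]
    have h4 := (hφ.diff (‖y - x‖ / t)).hasDerivAt.comp_hasFDerivAt y h3
    have h5 : HasFDerivAt (Ph φ x t) _ y := h4
    refine h5.congr_fderiv (ContinuousLinearMap.ext fun v => ?_)
    simp only [om, _root_.smul_apply, smul_eq_mul]
    field_simp

lemma Ps_cont_aux : Continuous fun q : ℝ => φ (Real.sqrt q) :=
  hφ.diff.continuous.comp Real.continuous_sqrt

lemma Ps_deriv (x : E4) {t : ℝ} (ht : 0 < t) (y : E4) :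
    HasFDerivAt (Ps φ x t) (-(Ph φ x t y) • innerSL ℝ (y - x)) y := by
  have h1 := nsq_deriv x y
  have h3 : HasFDerivAt (fun y : E4 => ‖y - x‖ ^ 2 / t ^ 2)
      ((t ^ 2)⁻¹ • ((2:ℝ) • innerSL ℝ (y - x))) y := by
    have := h1.const_smul (t ^ 2)⁻¹
    refine this.congr_of_eventuallyEq (Filter.Eventually.of_forall fun z => ?_)
    simp [div_eq_inv_mul]
  have h2 : HasDerivAt (fun a : ℝ => ∫ q in a..1, φ (Real.sqrt q))
      (-φ (Real.sqrt (‖y - x‖ ^ 2 / t ^ 2))) (‖y - x‖ ^ 2 / t ^ 2) :=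
    intervalIntegral.integral_hasDerivAt_left
      (hφ.Ps_cont_aux.intervalIntegrable _ _)
      (hφ.Ps_cont_aux.stronglyMeasurableAtFilter _ _) hφ.Ps_cont_aux.continuousAt
  have h4 := (h2.comp_hasFDerivAt y h3).const_smul (t ^ 2 / 2)
  have h5 : HasFDerivAt (Ps φ x t) _ y := h4
  have hs : Real.sqrt (‖y - x‖ ^ 2 / t ^ 2) = ‖y - x‖ / t := by
    rw [← div_pow, Real.sqrt_sq (by positivity)]
  refine h5.congr_fderiv (ContinuousLinearMap.ext fun v => ?_)
  simp only [hs, Ph, _root_.smul_apply, smul_eq_mul]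
  field_simp

lemma Ps_zero {x : E4} {t : ℝ} (ht : 0 < t) {y : E4} (h : t ≤ ‖y - x‖) : Ps φ x t y = 0 := by
  have h1 : 1 ≤ ‖y - x‖ ^ 2 / t ^ 2 := by
    rw [le_div_iff₀ (by positivity)]; nlinarith
  have : ∫ q in (‖y - x‖ ^ 2 / t ^ 2)..1, φ (Real.sqrt q) = 0 := by
    rw [intervalIntegral.integral_symm]
    have : ∫ q in (1:ℝ)..(‖y - x‖ ^ 2 / t ^ 2), φ (Real.sqrt q)
        = ∫ q in (1:ℝ)..(‖y - x‖ ^ 2 / t ^ 2), (0:ℝ) := by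
      apply intervalIntegral.integral_congr
      intro q hq
      rw [Set.uIcc_of_le h1] at hq
      exact hφ.zero _ (Real.one_le_sqrt.2 hq.1)
    rw [this]; simp
  rw [Ps, this, mul_zero]

lemma Ps_compact (x : E4) {t : ℝ} (ht : 0 < t) : HasCompactSupport (Ps φ x t) :=
  HasCompactSupport.intro (isCompact_closedBall x t) fun y hy => by
    rw [mem_closedBall, dist_eq_norm, not_le] at hy
    exact hφ.Ps_zero ht hy.le

lemma Ps_nonneg (x : E4) {t : ℝ} (ht : 0 < t) (y : E4) : 0 ≤ Ps φ x t y := by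
  rcases le_total t ‖y - x‖ with h | h
  · rw [hφ.Ps_zero ht h]
  · have h1 : ‖y - x‖ ^ 2 / t ^ 2 ≤ 1 := by
      rw [div_le_iff₀ (by positivity)]; nlinarith [norm_nonneg (y - x)]
    have := intervalIntegral.integral_nonneg (μ := volume) h1 (f := fun q => φ (Real.sqrt q))
      (fun q _ => hφ.nonneg _)
    unfold Ps; positivity

/-- pointwise comparison of weights -/
lemma om_le_Ph {M : ℝ} (hM : ∀ s, -deriv φ s ≤ M) (hM0 : 0 < M)
    {x x' : E4} {t R : ℝ} (ht : 0 < t) (hR : 0 < R)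
    (h : dist x x' + t ≤ 3/4 * R) (y : E4) :
    om φ x t y ≤ 4 * M / (3 * t) * Ph φ x' R y := by
  by_cases h0 : om φ x t y = 0
  · rw [h0]; have := hφ.Ph_nonneg x' R y; positivity
  obtain ⟨h1, h2⟩ := hφ.om_supp ht h0
  have hP : Ph φ x' R y = 1 := by
    apply hφ.one
    rw [div_le_iff₀ hR, ← dist_eq_norm]
    have := dist_triangle y x x'
    rw [← dist_eq_norm] at h2
    linarith
  rw [hP, mul_one]
  have h3 : ‖y - x‖⁻¹ ≤ (3/4 * t)⁻¹ := inv_anti₀ (by positivity) h1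
  have h4 := hM (‖y - x‖ / t)
  have h5 := hφ.d_nonpos (‖y - x‖ / t)
  calc om φ x t y = ‖y - x‖⁻¹ * (-deriv φ (‖y - x‖ / t)) := by rw [om]; ring
    _ ≤ (3/4 * t)⁻¹ * M := by gcongr; linarith
    _ = _ := by field_simp

end Cut

/-! ### Integral identities -/

lemma integrable_mul {K f : E4 → ℝ} (hK : Continuous K) (hc : HasCompactSupport K)
    (hf : Continuous f) : Integrable (fun y => K y * f y) :=
  (hK.mul hf).integrable_of_hasCompactSupport hc.mul_right

/-- Differentiation under the integral sign. -/
lemma param_deriv {K f : E4 → ℝ} (hK : Continuous K) (hc : HasCompactSupport K)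
    (hf : ContDiff ℝ 1 f) {a b : E4 → E4} (ha : Continuous a) (hb : Continuous b) (s₀ : ℝ) :
    HasDerivAt (fun s : ℝ => ∫ z, K z * f (a z + s • b z))
      (∫ z, K z * fderiv ℝ f (a z + s₀ • b z) (b z)) s₀ := by
  have hfc := hf.continuous
  have hdc : Continuous (fderiv ℝ f) := hf.continuous_fderiv (by simp)
  have hG : Continuous fun p : ℝ × E4 => fderiv ℝ f (a p.2 + p.1 • b p.2) (b p.2) :=
    (hdc.comp (by fun_prop)).clm_apply (by fun_prop)
  obtain ⟨C, hC⟩ := ((isCompact_closedBall s₀ 1).prod hc.isCompact).exists_bound_of_continuousOn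
    hG.continuousOn
  have hGs : ∀ s : ℝ, Continuous fun z : E4 => fderiv ℝ f (a z + s • b z) (b z) := fun s =>
    (hdc.comp (by fun_prop)).clm_apply hb
  refine (hasDerivAt_integral_of_dominated_loc_of_deriv_le (μ := (volume : Measure E4))
    (F := fun s z => K z * f (a z + s • b z))
    (F' := fun s z => K z * fderiv ℝ f (a z + s • b z) (b z))
    (bound := fun z => |K z| * C) (closedBall_mem_nhds s₀ one_pos) ?_ ?_ ?_ ?_ ?_ ?_).2
  · refine Filter.Eventually.of_forall fun s => ?_
    exact (hK.mul (hfc.comp (by fun_prop))).aestronglyMeasurable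
  · exact integrable_mul hK hc (hfc.comp (by fun_prop))
  · exact (hK.mul (hGs s₀)).aestronglyMeasurable
  · refine Filter.Eventually.of_forall fun z s hs => ?_
    rw [norm_mul, Real.norm_eq_abs]
    by_cases hz : K z = 0
    · simp [hz]
    · gcongr
      exact hC (s, z) ⟨hs, subset_tsupport _ hz⟩
  · exact integrable_mul hK.abs hc.norm continuous_const
  · refine Filter.Eventually.of_forall fun z s _ => ?_
    have h1 : HasDerivAt (fun s : ℝ => a z + s • b z) (b z) s := by
      simpa using ((hasDerivAt_id s).smul_const (b z)).const_add (a z)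
    have h2 := ((hf.differentiable (by simp)) (a z + s • b z)).hasFDerivAt.comp_hasDerivAt s h1
    exact h2.const_mul (K z)

lemma change_var (g : E4 → ℝ) (x : E4) {t : ℝ} (ht : 0 < t) :
    ∫ y, g y = t ^ 4 * ∫ z, g (x + t • z) := by
  have h1 := Measure.integral_comp_smul (volume : Measure E4) (fun y => g (x + y)) t
  rw [h1, integral_add_left_eq_self]
  simp only [finrank_euclideanSpace, Fintype.card_fin, smul_eq_mul]
  rw [abs_of_pos (by positivity)]
  field_simp

lemma om_scale (φ : ℝ → ℝ) (x : E4) {t : ℝ} (ht : 0 < t) (z : E4) :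
    om φ x t (x + t • z) = t⁻¹ * om φ 0 1 z := by
  have : ‖t • z‖ = t * ‖z‖ := by rw [norm_smul, Real.norm_eq_abs, abs_of_pos ht]
  simp only [om, add_sub_cancel_left, this, sub_zero, div_one, mul_inv]
  rw [mul_div_cancel_left₀ _ ht.ne']; ring

lemma Ph_scale (φ : ℝ → ℝ) (x : E4) {t : ℝ} (ht : 0 < t) (z : E4) :
    Ph φ x t (x + t • z) = Ph φ 0 1 z := by
  have : ‖t • z‖ = t * ‖z‖ := by rw [norm_smul, Real.norm_eq_abs, abs_of_pos ht]
  simp only [Ph, add_sub_cancel_left, this, sub_zero, div_one]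
  rw [mul_div_cancel_left₀ _ ht.ne']

lemma om_int_scale (φ : ℝ → ℝ) (f : E4 → ℝ) (x : E4) {t : ℝ} (ht : 0 < t) :
    ∫ y, om φ x t y * f y = t ^ 3 * ∫ z, om φ 0 1 z * f (x + t • z) := by
  rw [change_var _ x ht]
  simp only [om_scale φ x ht, mul_assoc]
  rw [integral_const_mul]
  field_simp

lemma Ph_int_scale (φ : ℝ → ℝ) (f : E4 → ℝ) (x : E4) {t : ℝ} (ht : 0 < t) :
    ∫ y, Ph φ x t y * f y = t ^ 4 * ∫ z, Ph φ 0 1 z * f (x + t • z) := by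
  rw [change_var _ x ht]
  simp only [Ph_scale φ x ht]

section
variable {φ : ℝ → ℝ} (hφ : Cut φ) {f : E4 → ℝ} (hf : ContDiff ℝ 1 f)
include hφ hf

lemma om_deriv_space (x v : E4) {t : ℝ} (ht : 0 < t) (s : ℝ) :
    HasDerivAt (fun s : ℝ => ∫ y, om φ (x + s • v) t y * f y)
      (∫ y, om φ (x + s • v) t y * fderiv ℝ f y v) s := by
  simp only [om_int_scale φ _ _ ht]
  have h := (param_deriv (hφ.om_cont 0 one_pos) (hφ.om_compact 0 one_pos) hf
    (a := fun z => x + t • z) (b := fun _ => v) (by fun_prop) (by fun_prop) s).const_mul (t ^ 3)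
  simpa only [add_right_comm] using h

lemma Ph_deriv_space (x v : E4) {t : ℝ} (ht : 0 < t) (s : ℝ) :
    HasDerivAt (fun s : ℝ => ∫ y, Ph φ (x + s • v) t y * f y)
      (∫ y, Ph φ (x + s • v) t y * fderiv ℝ f y v) s := by
  simp only [Ph_int_scale φ _ _ ht]
  have h := (param_deriv (hφ.Ph_cont 0 1) (hφ.Ph_compact 0 one_pos) hf
    (a := fun z => x + t • z) (b := fun _ => v) (by fun_prop) (by fun_prop) s).const_mul (t ^ 4)
  simpa only [add_right_comm] using h

lemma om_deriv_rad (x : E4) {t : ℝ} (ht : 0 < t) :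
    HasDerivAt (fun t : ℝ => ∫ y, om φ x t y * f y)
      (3 / t * (∫ y, om φ x t y * f y) +
        1 / t * ∫ y, om φ x t y * fderiv ℝ f y (y - x)) t := by
  have h := (hasDerivAt_pow 3 t).mul (param_deriv (hφ.om_cont 0 one_pos)
    (hφ.om_compact 0 one_pos) hf (a := fun z => x) (b := fun z => z) (by fun_prop) (by fun_prop) t)
  refine (h.congr_of_eventuallyEq ?_).congr_deriv ?_
  · filter_upwards [Ioi_mem_nhds ht] with s hs
    exact om_int_scale φ f x hs
  · rw [om_int_scale φ f x ht, om_int_scale φ (fun y => fderiv ℝ f y (y - x)) x ht]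
    simp only [add_sub_cancel_left, map_smul, smul_eq_mul, mul_left_comm _ t]
    rw [integral_const_mul]
    field_simp
    norm_num
    ring

lemma Ph_deriv_rad (x : E4) {t : ℝ} (ht : 0 < t) :
    HasDerivAt (fun t : ℝ => ∫ y, Ph φ x t y * f y)
      (4 / t * (∫ y, Ph φ x t y * f y) +
        1 / t * ∫ y, Ph φ x t y * fderiv ℝ f y (y - x)) t := by
  have h := (hasDerivAt_pow 4 t).mul (param_deriv (hφ.Ph_cont 0 1)
    (hφ.Ph_compact 0 one_pos) hf (a := fun z => x) (b := fun z => z) (by fun_prop) (by fun_prop) t)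
  refine (h.congr_of_eventuallyEq ?_).congr_deriv ?_
  · filter_upwards [Ioi_mem_nhds ht] with s hs
    exact Ph_int_scale φ f x hs
  · rw [Ph_int_scale φ f x ht, Ph_int_scale φ (fun y => fderiv ℝ f y (y - x)) x ht]
    simp only [add_sub_cancel_left, map_smul, smul_eq_mul, mul_left_comm _ t]
    rw [integral_const_mul]
    field_simp
    norm_num
    ring

end

lemma Hphi_eq (φ : ℝ → ℝ) (u : E4 → E) (x : E4) (t : ℝ) :
    Hphi φ u x t = ∫ y, om φ x t y * ‖u y‖ ^ 2 := by
  rw [Hphi, ← integral_neg]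
  congr 1; funext y; rw [om]; ring

lemma Dphi_eq (φ : ℝ → ℝ) (u : E4 → E) (x : E4) (t : ℝ) :
    Dphi φ u x t = ∫ y, Ph φ x t y * gradSq u y := by
  rw [Dphi]
  congr 1; funext y; rw [Ph]; ring

lemma gradSq_eq (u : E4 → E) (y : E4) : gradSq u y = ∑ i, ⟪pd i u y, pd i u y⟫ := by
  simp [gradSq, pd]

lemma gradSq_nonneg (u : E4 → E) (y : E4) : 0 ≤ gradSq u y :=
  Finset.sum_nonneg fun i _ => by positivity

lemma normSq_smooth {u : E4 → E} (hu : ContDiff ℝ (⊤ : ℕ∞) u) :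
    ContDiff ℝ 1 (fun y => ‖u y‖ ^ 2) := (hu.of_le (by simp)).norm_sq ℝ

lemma gradSq_smooth {u : E4 → E} (hu : ContDiff ℝ (⊤ : ℕ∞) u) : ContDiff ℝ 1 (gradSq u) := by
  have : gradSq u = fun y => ∑ i, ‖pd i u y‖ ^ 2 := rfl
  rw [this]
  exact ContDiff.sum fun i _ => normSq_smooth (pd_smooth hu i)

lemma fderiv_normSq {u : E4 → E} (hu : ContDiff ℝ (⊤ : ℕ∞) u) (y v : E4) :
    fderiv ℝ (fun y => ‖u y‖ ^ 2) y v = 2 * ⟪u y, fderiv ℝ u y v⟫ := by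
  rw [((smooth_diff hu y).hasFDerivAt.norm_sq).fderiv]
  simp

lemma fderiv_gradSq {u : E4 → E} (hu : ContDiff ℝ (⊤ : ℕ∞) u) (y v : E4) :
    fderiv ℝ (gradSq u) y v = 2 * ∑ i, ⟪pd i u y, fderiv ℝ (pd i u) y v⟫ := by
  have : gradSq u = fun y => ∑ i, ‖pd i u y‖ ^ 2 := rfl
  rw [this, fderiv_fun_sum (fun i _ => ((normSq_smooth (pd_smooth hu i)).differentiable
    (by simp)) y)]
  simp [fderiv_normSq (pd_smooth hu _), Finset.mul_sum]

/-- directional derivative -/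
def dv (v : E4) (u : E4 → E) (y : E4) : E := fderiv ℝ u y v

lemma dv_smooth {u : E4 → E} (hu : ContDiff ℝ (⊤ : ℕ∞) u) (v : E4) :
    ContDiff ℝ (⊤ : ℕ∞) (dv v u) :=
  (hu.fderiv_right (by simp)).clm_apply contDiff_const

lemma pd_dv {u : E4 → E} (hu : ContDiff ℝ (⊤ : ℕ∞) u) (v : E4) (i : Fin 4) (y : E4) :
    pd i (dv v u) y = fderiv ℝ (pd i u) y v := by
  have hd : ∀ j, Differentiable ℝ (pd j u) := fun j => smooth_diff (pd_smooth hu j)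
  have : dv v u = fun y => ∑ j, v j • pd j u y := funext fun y => fderiv_sum_pd u y v
  rw [this, pd_sum (fun j => (hd j).fun_const_smul (v j)), fderiv_sum_pd]
  simp only [pd_const_smul (hd _)]
  exact Finset.sum_congr rfl fun j _ => by rw [pd_comm hu]

/-! ### Variation formulas -/

/-- weighted inner product -/
def II (φ : ℝ → ℝ) (x : E4) (t : ℝ) (f g : E4 → E) : ℝ := ∫ y, om φ x t y * ⟪f y, g y⟫

section
variable {φ : ℝ → ℝ} (hφ : Cut φ)
include hφ

lemma II_int (x : E4) {t : ℝ} (ht : 0 < t) {f g : E4 → E} (hf : Continuous f)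
    (hg : Continuous g) : Integrable (fun y => om φ x t y * ⟪f y, g y⟫) :=
  integrable_mul (hφ.om_cont x ht) (hφ.om_compact x ht) (hf.inner hg)

omit hφ in
lemma II_comm (x : E4) (t : ℝ) (f g : E4 → E) : II φ x t f g = II φ x t g f := by
  simp only [II, real_inner_comm]

lemma II_nonneg (x : E4) (t : ℝ) (f : E4 → E) : 0 ≤ II φ x t f f :=
  integral_nonneg fun y => mul_nonneg (hφ.om_nonneg x t y) real_inner_self_nonneg

lemma II_sub_smul (x : E4) {t : ℝ} (ht : 0 < t) {f g h : E4 → E} (hf : Continuous f)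
    (hg : Continuous g) (hh : Continuous h) (c : ℝ) :
    II φ x t (fun y => f y - c • g y) h = II φ x t f h - c * II φ x t g h := by
  unfold II
  rw [← integral_const_mul, ← integral_sub (II_int hφ x ht hf hh) ((II_int hφ x ht hg hh).const_mul c)]
  congr 1; funext y
  rw [inner_sub_left, real_inner_smul_left]; ring

omit hφ in
lemma Hphi_eq_II (u : E4 → E) (x : E4) (t : ℝ) : Hphi φ u x t = II φ x t u u := by
  rw [Hphi_eq, II]; simp only [real_inner_self_eq_norm_sq]

lemma Dphi_nonneg (u : E4 → E) (x : E4) (t : ℝ) : 0 ≤ Dphi φ u x t := by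
  rw [Dphi_eq]
  exact integral_nonneg fun y => mul_nonneg (hφ.Ph_nonneg x t y) (gradSq_nonneg u y)

section
variable {u : E4 → E} (hu : ContDiff ℝ (⊤ : ℕ∞) u) {x : E4} {t : ℝ} (ht : 0 < t)
  (h0 : ∀ y ∈ closedBall x t, lap u y = 0)
include hu ht h0

lemma green_Ph {h : E4 → E} (hh : ContDiff ℝ (⊤ : ℕ∞) h) :
    ∫ y, Ph φ x t y * ∑ i, ⟪pd i h y, pd i u y⟫ = 1 / t * II φ x t h (rad x u) := by
  rw [green hu hh (κ := fun y => om φ x t y / t) (hφ.Ph_deriv x ht)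
    ((hφ.om_cont x ht).div_const t) (hφ.Ph_compact x ht) ?_ ?_, II, ← integral_const_mul]
  · congr 1; funext y; ring
  · have := (hφ.om_compact x ht).mul_right (f' := fun _ => t⁻¹)
    exact this
  · intro y hy
    exact h0 y (by rw [mem_closedBall, dist_eq_norm]; exact (hφ.Ph_supp ht hy).le)

lemma II_u_rad : II φ x t u (rad x u) = t * Dphi φ u x t := by
  have := green_Ph hφ hu ht h0 hu
  rw [Dphi_eq]
  simp only [gradSq_eq]
  rw [this]; field_simp

/-- the ball integral is controlled by the shell integral -/
lemma ball_bound : 4 * ∫ y, Ph φ x t y * ‖u y‖ ^ 2 ≤ t * II φ x t u u := by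
  have hco : ∀ i : Fin 4, ContDiff ℝ 1 (fun y : E4 => y i - x i) := fun i =>
    ((EuclideanSpace.proj i : E4 →L[ℝ] ℝ).contDiff).sub contDiff_const
  have hn := normSq_smooth hu
  have h1 := ibp (g := fun i y => (y i - x i) * ‖u y‖ ^ 2)
    (fun i => (hco i).mul hn) (κ := fun y => om φ x t y / t) (hφ.Ph_deriv x ht)
    ((hφ.om_cont x ht).div_const t) (hφ.Ph_compact x ht)
    ((hφ.om_compact x ht).mul_right (f' := fun _ => t⁻¹))
  have h2 : ∀ y, ∑ i, pd i (fun y => (y i - x i) * ‖u y‖ ^ 2) y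
      = 4 * ‖u y‖ ^ 2 + 2 * ⟪u y, rad x u y⟫ := by
    intro y
    have : ∀ i, pd i (fun y => (y i - x i) * ‖u y‖ ^ 2) y
        = (y i - x i) • pd i (fun y => ‖u y‖ ^ 2) y + ‖u y‖ ^ 2 := by
      intro i
      have := pd_coord_smul (f := fun y => ‖u y‖ ^ 2) (hn.differentiable (by simp)) x i i y
      simpa using this
    simp only [this, Finset.sum_add_distrib, ← fderiv_normSq hu y (y - x), rad,
      fderiv_sum_pd (fun y => ‖u y‖ ^ 2) y (y - x)]
    simp [add_comm]
  have h3 : 0 ≤ ∫ y, Ph φ x t y * ⟪u y, rad x u y⟫ := by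
    rw [← green hu hu (hφ.Ps_deriv x ht) (hφ.Ph_cont x t) (hφ.Ps_compact x ht)
      (hφ.Ph_compact x ht) ?_]
    · refine integral_nonneg fun y => mul_nonneg (hφ.Ps_nonneg x ht y) ?_
      exact Finset.sum_nonneg fun i _ => real_inner_self_nonneg
    · intro y hy
      refine h0 y ?_
      rw [mem_closedBall, dist_eq_norm]
      by_contra! hc
      exact hy (hφ.Ps_zero ht hc.le)
  have hc1 : Continuous fun y => ‖u y‖ ^ 2 := hn.continuous
  have hc2 : Continuous fun y => ⟪u y, rad x u y⟫ :=
    hu.continuous.inner (rad_smooth hu x).continuous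
  have h4 : ∫ y, Ph φ x t y * ∑ i, pd i (fun y => (y i - x i) * ‖u y‖ ^ 2) y
      = 4 * (∫ y, Ph φ x t y * ‖u y‖ ^ 2) + 2 * ∫ y, Ph φ x t y * ⟪u y, rad x u y⟫ := by
    rw [← integral_const_mul, ← integral_const_mul, ← integral_add]
    · congr 1; funext y; rw [h2]; ring
    · exact (integrable_mul (hφ.Ph_cont x t) (hφ.Ph_compact x ht) hc1).const_mul _
    · exact (integrable_mul (hφ.Ph_cont x t) (hφ.Ph_compact x ht) hc2).const_mul _
  have h5 : ∫ y, om φ x t y / t * ∑ i, (y i - x i) * ((y i - x i) * ‖u y‖ ^ 2)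
      ≤ t * II φ x t u u := by
    have hs : ∀ y : E4, ∑ i, (y i - x i) * ((y i - x i) * ‖u y‖ ^ 2)
        = ‖y - x‖ ^ 2 * ‖u y‖ ^ 2 := by
      intro y
      rw [EuclideanSpace.norm_sq_eq, Finset.sum_mul]
      refine Finset.sum_congr rfl fun i _ => ?_
      simp; ring
    simp only [hs]
    rw [II, ← integral_const_mul]
    refine integral_mono ?_ ?_ fun y => ?_
    · refine integrable_mul ((hφ.om_cont x ht).div_const t)
        ((hφ.om_compact x ht).mul_right (f' := fun _ => t⁻¹)) ?_
      exact Continuous.mul (by fun_prop) hc1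
    · exact (II_int hφ x ht hu.continuous hu.continuous).const_mul t
    · simp only [real_inner_self_eq_norm_sq]
      by_cases hz : om φ x t y = 0
      · simp [hz]
      have hle := (hφ.om_supp ht hz).2
      have hom := hφ.om_nonneg x t y
      have : ‖y - x‖ ^ 2 ≤ t ^ 2 := by gcongr
      calc om φ x t y / t * (‖y - x‖ ^ 2 * ‖u y‖ ^ 2)
          ≤ om φ x t y / t * (t ^ 2 * ‖u y‖ ^ 2) := by gcongr
        _ = _ := by field_simp
  rw [h4] at h1
  linarith

omit h0 in
lemma H_deriv_aux : HasDerivAt (fun t => Hphi φ u x t)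
    (3 / t * Hphi φ u x t + 2 / t * II φ x t u (rad x u)) t := by
  have := om_deriv_rad hφ (normSq_smooth hu) x ht
  simp only [Hphi_eq]
  refine this.congr_deriv ?_
  simp only [fderiv_normSq hu, II, rad, mul_left_comm _ (2:ℝ)]
  rw [integral_const_mul]; ring

lemma H_deriv : HasDerivAt (fun t => Hphi φ u x t)
    (3 / t * Hphi φ u x t + 2 * Dphi φ u x t) t := by
  refine (H_deriv_aux hφ hu ht).congr_deriv ?_
  rw [II_u_rad hφ hu ht h0]; field_simp

lemma D_deriv : HasDerivAt (fun t => Dphi φ u x t)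
    (2 / t * Dphi φ u x t + 2 / t ^ 2 * II φ x t (rad x u) (rad x u)) t := by
  have h1 := Ph_deriv_rad hφ (gradSq_smooth hu) x ht
  have h2 := green_Ph hφ hu ht h0 (rad_smooth hu x)
  simp only [Dphi_eq]
  refine h1.congr_deriv ?_
  have h3 : ∀ y, fderiv ℝ (gradSq u) y (y - x)
      = 2 * (∑ i, ⟪pd i (rad x u) y, pd i u y⟫) - 2 * gradSq u y := by
    intro y
    rw [fderiv_gradSq hu, gradSq_eq, ← mul_sub, ← Finset.sum_sub_distrib]
    congr 1
    refine Finset.sum_congr rfl fun i _ => ?_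
    rw [pd_rad' hu, inner_add_left, rad, real_inner_comm (pd i u y) (fderiv ℝ (pd i u) y (y - x))]
    ring
  have hc : Continuous fun y => ∑ i, ⟪pd i (rad x u) y, pd i u y⟫ :=
    continuous_finsetSum _ fun i _ => (pd_smooth (rad_smooth hu x) i).continuous.inner
      (pd_smooth hu i).continuous
  have h4 : ∫ y, Ph φ x t y * fderiv ℝ (gradSq u) y (y - x)
      = 2 * (∫ y, Ph φ x t y * ∑ i, ⟪pd i (rad x u) y, pd i u y⟫)
        - 2 * ∫ y, Ph φ x t y * gradSq u y := by
    rw [← integral_const_mul, ← integral_const_mul, ← integral_sub]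
    · congr 1; funext y; rw [h3]; ring
    · exact (integrable_mul (hφ.Ph_cont x t) (hφ.Ph_compact x ht) hc).const_mul _
    · exact (integrable_mul (hφ.Ph_cont x t) (hφ.Ph_compact x ht)
        (gradSq_smooth hu).continuous).const_mul _
  rw [h4, h2]
  field_simp
  ring

/-- the radial derivative of the frequency -/
lemma N_deriv (hH : 0 < Hphi φ u x t) : HasDerivAt (fun t => Nphi φ u x t)
    (2 / (t * Hphi φ u x t) *
      II φ x t (fun y => rad x u y - Nphi φ u x t • u y)
        (fun y => rad x u y - Nphi φ u x t • u y)) t := by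
  have h1 := ((hasDerivAt_id t).mul (D_deriv hφ hu ht h0)).div (H_deriv hφ hu ht h0) hH.ne'
  have h2 : HasDerivAt (fun t => Nphi φ u x t) _ t := h1
  refine h2.congr_deriv ?_
  have hr := (rad_smooth hu x).continuous
  have hw : Continuous fun y => rad x u y - Nphi φ u x t • u y :=
    hr.sub (hu.continuous.const_smul _)
  rw [II_sub_smul hφ x ht hr hu.continuous hw, II_comm x t (rad x u) (fun y => rad x u y - Nphi φ u x t • u y),
    II_comm x t u (fun y => rad x u y - Nphi φ u x t • u y),
    II_sub_smul hφ x ht hr hu.continuous hr, II_sub_smul hφ x ht hr hu.continuous hu.continuous,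
    II_comm x t (rad x u) u, II_u_rad hφ hu ht h0, ← Hphi_eq_II u, Nphi]
  have := hH.ne'
  simp only [Pi.mul_apply, id]
  field_simp
  ring

end

/-- the spatial derivative of the frequency -/
lemma N_deriv_space {u : E4 → E} (hu : ContDiff ℝ (⊤ : ℕ∞) u) (x v : E4) {t : ℝ} (ht : 0 < t)
    (s : ℝ) (h0 : ∀ y ∈ closedBall (x + s • v) t, lap u y = 0)
    (hH : 0 < Hphi φ u (x + s • v) t) :
    HasDerivAt (fun s : ℝ => Nphi φ u (x + s • v) t)
      (2 / Hphi φ u (x + s • v) t * II φ (x + s • v) t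
        (fun y => rad (x + s • v) u y - Nphi φ u (x + s • v) t • u y) (dv v u)) s := by
  have hHd : HasDerivAt (fun s : ℝ => Hphi φ u (x + s • v) t)
      (2 * II φ (x + s • v) t u (dv v u)) s := by
    have := om_deriv_space hφ (normSq_smooth hu) x v ht s
    simp only [Hphi_eq]
    refine this.congr_deriv ?_
    simp only [fderiv_normSq hu, II, dv, mul_left_comm _ (2:ℝ)]
    rw [integral_const_mul]
  have hDd : HasDerivAt (fun s : ℝ => Dphi φ u (x + s • v) t)
      (2 / t * II φ (x + s • v) t (dv v u) (rad (x + s • v) u)) s := by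
    have := Ph_deriv_space hφ (gradSq_smooth hu) x v ht s
    simp only [Dphi_eq]
    refine this.congr_deriv ?_
    have h2 := green_Ph hφ hu ht h0 (dv_smooth hu v)
    simp only [pd_dv hu] at h2
    simp only [fderiv_gradSq hu, mul_left_comm _ (2:ℝ)]
    rw [integral_const_mul]
    simp only [real_inner_comm] at h2 ⊢
    rw [h2]; ring
  have h1 := (hDd.const_mul t).div hHd hH.ne'
  have h2 : HasDerivAt (fun s : ℝ => Nphi φ u (x + s • v) t) _ s := h1
  refine h2.congr_deriv ?_
  rw [II_sub_smul hφ _ ht (rad_smooth hu _).continuous hu.continuous (dv_smooth hu v).continuous,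
    II_comm _ t (rad _ u), Nphi]
  have := hH.ne'
  field_simp

end

/-! ### Comparison estimates -/

section
variable {φ : ℝ → ℝ} (hφ : Cut φ)
include hφ

/-- moving the centre: a shell integral is controlled by a larger shell integral. -/
lemma II_compare {M : ℝ} (hM : ∀ s, -deriv φ s ≤ M) (hM0 : 0 < M)
    {w : E4 → E} (hw : ContDiff ℝ (⊤ : ℕ∞) w) {x x' : E4} {t R : ℝ} (ht : 0 < t) (hR : 0 < R)
    (h : dist x x' + t ≤ 3/4 * R) (h0 : ∀ y ∈ closedBall x' R, lap w y = 0) :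
    II φ x t w w ≤ M * R / (3 * t) * II φ x' R w w := by
  have hb := ball_bound hφ hw hR h0
  have hc : Continuous fun y => ‖w y‖ ^ 2 := (normSq_smooth hw).continuous
  have h1 : II φ x t w w ≤ 4 * M / (3 * t) * ∫ y, Ph φ x' R y * ‖w y‖ ^ 2 := by
    rw [II, ← integral_const_mul]
    refine integral_mono (II_int hφ x ht hw.continuous hw.continuous)
      ((integrable_mul (hφ.Ph_cont x' R) (hφ.Ph_compact x' hR) hc).const_mul _) fun y => ?_
    simp only [real_inner_self_eq_norm_sq, ← mul_assoc]
    exact mul_le_mul_of_nonneg_right (hφ.om_le_Ph hM hM0 ht hR h y) (by positivity)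
  calc II φ x t w w ≤ M / (3 * t) * (4 * ∫ y, Ph φ x' R y * ‖w y‖ ^ 2) := by
        refine h1.trans_eq ?_; ring
    _ ≤ M / (3 * t) * (R * II φ x' R w w) := by gcongr
    _ = _ := by ring

/-- doubling -/
lemma doubling {u : E4 → E} (hu : ContDiff ℝ (⊤ : ℕ∞) u) {c : E4} {r Λ : ℝ} (hr : 0 < r)
    (h0 : ∀ y ∈ closedBall c (4 * r), lap u y = 0)
    (hH : ∀ t ∈ Set.Ioc (0:ℝ) (4 * r), 0 < Hphi φ u c t ∧ Nphi φ u c t ≤ Λ)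
    {m : ℕ} (hm : 3 + 2 * Λ ≤ m + 1) {τ : ℝ} (hτ : τ ∈ Set.Icc (r / 2) (4 * r)) :
    Hphi φ u c τ ≤ 8 ^ (m + 1) * Hphi φ u c (r / 2) := by
  have hd : ∀ t ∈ Set.Icc (r / 2) (4 * r), HasDerivAt (fun t => Hphi φ u c t / t ^ (m + 1))
      (((3 / t * Hphi φ u c t + 2 * Dphi φ u c t) * t ^ (m + 1) -
        Hphi φ u c t * (((m + 1 : ℕ) : ℝ) * t ^ m)) / (t ^ (m + 1)) ^ 2) t := by
    intro t ht
    have ht0 : 0 < t := by linarith [ht.1]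
    have h1 := H_deriv hφ hu ht0 (x := c)
      (fun y hy => h0 y (closedBall_subset_closedBall ht.2 hy))
    have h2 : HasDerivAt (fun t => Hphi φ u c t / t ^ (m + 1)) _ t :=
      h1.div (hasDerivAt_pow (m + 1) t) (by positivity)
    exact h2.congr_deriv (by simp)
  have hanti : AntitoneOn (fun t => Hphi φ u c t / t ^ (m + 1)) (Set.Icc (r / 2) (4 * r)) := by
    refine antitoneOn_of_deriv_nonpos (convex_Icc _ _)
      (fun t ht => (hd t ht).continuousAt.continuousWithinAt)
      (fun t ht => (hd t (interior_subset ht)).differentiableAt.differentiableWithinAt)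
      fun t ht => ?_
    have ht' := interior_subset ht
    have ht0 : 0 < t := by linarith [ht'.1]
    rw [(hd t ht').deriv]
    obtain ⟨hp, hn⟩ := hH t ⟨ht0, ht'.2⟩
    rw [Nphi, div_le_iff₀ hp] at hn
    refine div_nonpos_of_nonpos_of_nonneg ?_ (by positivity)
    have : (3 / t * Hphi φ u c t + 2 * Dphi φ u c t) * t ^ (m + 1) -
        Hphi φ u c t * (((m + 1 : ℕ) : ℝ) * t ^ m)
        = t ^ m * (3 * Hphi φ u c t + 2 * (t * Dphi φ u c t) - (m + 1) * Hphi φ u c t) := by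
      push_cast
      field_simp
      ring
    rw [this]
    refine mul_nonpos_of_nonneg_of_nonpos (by positivity) ?_
    nlinarith
  have h1 := hanti (⟨le_rfl, by linarith⟩ : r / 2 ∈ Set.Icc (r / 2) (4 * r)) hτ hτ.1
  have hτ0 : 0 < τ := by linarith [hτ.1]
  have hp := (hH (r / 2) ⟨by positivity, by linarith⟩).1
  simp only at h1
  rw [div_le_iff₀ (by positivity)] at h1
  have h2 : τ ^ (m + 1) ≤ (8 * (r / 2)) ^ (m + 1) := by
    gcongr; linarith [hτ.2]
  calc Hphi φ u c τ ≤ Hphi φ u c (r / 2) / (r / 2) ^ (m + 1) * τ ^ (m + 1) := h1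
    _ ≤ Hphi φ u c (r / 2) / (r / 2) ^ (m + 1) * (8 * (r / 2)) ^ (m + 1) := by gcongr
    _ = _ := by rw [mul_pow]; field_simp

lemma N_nonneg {u : E4 → E} {c : E4} {t : ℝ} (ht : 0 ≤ t) (hp : 0 < Hphi φ u c t) :
    0 ≤ Nphi φ u c t :=
  div_nonneg (mul_nonneg ht (Dphi_nonneg hφ u c t)) hp.le

/-- the estimate at one centre -/
lemma one_centre {M : ℝ} (hM : ∀ s, -deriv φ s ≤ M) (hM0 : 0 < M)
    {u : E4 → E} (hu : ContDiff ℝ (⊤ : ℕ∞) u) {c : E4} {r Λ : ℝ} (hr : 0 < r)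
    {U : Set E4} (hU : IsOpen U) (hcU : closedBall c (4 * r) ⊆ U) (h0 : ∀ y ∈ U, lap u y = 0)
    (hH : ∀ t ∈ Set.Ioc (0:ℝ) (4 * r), 0 < Hphi φ u c t ∧ Nphi φ u c t ≤ Λ)
    {m : ℕ} (hm : 3 + 2 * Λ ≤ m + 1) :
    0 ≤ Nphi φ u c (4 * r) - Nphi φ u c (r / 4) ∧
    Nphi φ u c (4 * r) - Nphi φ u c (r / 4) ≤ Λ ∧
    ∃ a : ℝ, ∀ x : E4, dist x c ≤ r / 4 → (∀ y ∈ closedBall x r, lap u y = 0) →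
      II φ x r (fun y => rad c u y - a • u y) (fun y => rad c u y - a • u y) ≤
        (4 * M / 3) * (8 ^ (m + 1) * (2 * M / 3)) * Hphi φ u x r *
          (Nphi φ u c (4 * r) - Nphi φ u c (r / 4)) := by
  have hd : ∀ t ∈ Set.Icc (r / 4) (4 * r), HasDerivAt (fun t => Nphi φ u c t)
      (2 / (t * Hphi φ u c t) *
        II φ c t (fun y => rad c u y - Nphi φ u c t • u y)
        (fun y => rad c u y - Nphi φ u c t • u y)) t := by
    intro t ht
    have ht0 : 0 < t := by linarith [ht.1]
    exact N_deriv hφ hu ht0 (fun y hy => h0 y (hcU (closedBall_subset_closedBall ht.2 hy)))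
      (hH t ⟨ht0, ht.2⟩).1
  have hmono : MonotoneOn (fun t => Nphi φ u c t) (Set.Icc (r / 4) (4 * r)) := by
    refine monotoneOn_of_deriv_nonneg (convex_Icc _ _)
      (fun t ht => (hd t ht).continuousAt.continuousWithinAt)
      (fun t ht => (hd t (interior_subset ht)).differentiableAt.differentiableWithinAt)
      fun t ht => ?_
    have ht' := interior_subset ht
    have ht0 : 0 < t := by linarith [ht'.1]
    rw [(hd t ht').deriv]
    have := (hH t ⟨ht0, ht'.2⟩).1
    have h2 := II_nonneg hφ c t (fun y => rad c u y - Nphi φ u c t • u y)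
    positivity
  have hmem : ∀ t, r / 4 ≤ t → t ≤ 4 * r → t ∈ Set.Icc (r / 4) (4 * r) := fun t a b => ⟨a, b⟩
  have hW0 : Nphi φ u c (r / 4) ≤ Nphi φ u c (4 * r) :=
    hmono (hmem _ le_rfl (by linarith)) (hmem _ (by linarith) le_rfl) (by linarith)
  have hW1 : Nphi φ u c (r / 4) ≤ Nphi φ u c (2 * r) :=
    hmono (hmem _ le_rfl (by linarith)) (hmem _ (by linarith) (by linarith)) (by linarith)
  have hN0 := N_nonneg hφ (by positivity) (hH (r / 4) ⟨by positivity, by linarith⟩).1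
  have hNL := (hH (4 * r) ⟨by positivity, le_rfl⟩).2
  refine ⟨by linarith, by linarith, ?_⟩
  obtain ⟨τ, hτ, hslope⟩ := exists_hasDerivAt_eq_slope (fun t => Nphi φ u c t) _
    (show 2 * r < 4 * r by linarith)
    (fun t ht => (hd t (hmem t (by linarith [ht.1]) ht.2)).continuousAt.continuousWithinAt)
    (fun t ht => hd t (hmem t (by linarith [ht.1]) ht.2.le))
  refine ⟨Nphi φ u c τ, fun x hx hx0 => ?_⟩
  set W := Nphi φ u c (4 * r) - Nphi φ u c (r / 4) with hWdef
  set w := fun y => rad c u y - Nphi φ u c τ • u y with hw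
  have hτ0 : 0 < τ := by linarith [hτ.1]
  have hHτ := (hH τ ⟨hτ0, hτ.2.le⟩).1
  have hws : ContDiff ℝ (⊤ : ℕ∞) w := (rad_smooth hu c).sub (contDiff_const.smul hu)
  -- the shell integral at `τ`
  have h1 : II φ c τ w w ≤ Hphi φ u c τ * W := by
    have e : II φ c τ w w = τ * Hphi φ u c τ / 2 *
        ((Nphi φ u c (4 * r) - Nphi φ u c (2 * r)) / (4 * r - 2 * r)) := by
      rw [← hslope]; field_simp
    rw [e]
    have h3 : Nphi φ u c (4 * r) - Nphi φ u c (2 * r) ≤ W := by linarith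
    have hW : 0 ≤ W := by linarith
    calc τ * Hphi φ u c τ / 2 * ((Nphi φ u c (4 * r) - Nphi φ u c (2 * r)) / (4 * r - 2 * r))
        ≤ (4 * r) * Hphi φ u c τ / 2 * (W / (2 * r)) := by
          have : 4 * r - 2 * r = 2 * r := by ring
          rw [this]
          have hq : (Nphi φ u c (4 * r) - Nphi φ u c (2 * r)) / (2 * r) ≤ W / (2 * r) := by gcongr
          have hp : τ * Hphi φ u c τ / 2 ≤ (4 * r) * Hphi φ u c τ / 2 := by
            gcongr; exact hτ.2.le
          have hq0 : 0 ≤ W / (2 * r) := by positivity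
          exact (mul_le_mul_of_nonneg_left hq (by positivity)).trans
            (mul_le_mul_of_nonneg_right hp hq0)
      _ = _ := by field_simp; ring
  have h2 : II φ x r w w ≤ M * τ / (3 * r) * II φ c τ w w := by
    refine II_compare hφ hM hM0 hws hr hτ0 (by linarith [hτ.1]) ?_
    intro y hy
    exact lap_w hu hU h0 c _ y (hcU (closedBall_subset_closedBall hτ.2.le hy))
  have h3 : Hphi φ u c τ ≤ 8 ^ (m + 1) * Hphi φ u c (r / 2) :=
    doubling hφ hu hr (fun y hy => h0 y (hcU hy)) hH hm ⟨by linarith [hτ.1], hτ.2.le⟩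
  have h4 : Hphi φ u c (r / 2) ≤ (2 * M / 3) * Hphi φ u x r := by
    rw [Hphi_eq_II, Hphi_eq_II]
    refine (II_compare hφ hM hM0 hu (t := r / 2) (R := r) (by positivity) hr ?_ hx0).trans_eq ?_
    · rw [dist_comm]; linarith
    · field_simp
  have hHx : 0 ≤ Hphi φ u x r := by rw [Hphi_eq_II]; exact II_nonneg hφ x r u
  have hW : 0 ≤ W := by linarith
  have hcoef : M * τ / (3 * r) ≤ 4 * M / 3 := by
    rw [div_le_div_iff₀ (by positivity) (by positivity)]
    nlinarith [mul_le_mul_of_nonneg_left hτ.2.le hM0.le]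
  calc II φ x r w w ≤ M * τ / (3 * r) * II φ c τ w w := h2
    _ ≤ 4 * M / 3 * II φ c τ w w :=
        mul_le_mul_of_nonneg_right hcoef (II_nonneg hφ c τ w)
    _ ≤ 4 * M / 3 * (Hphi φ u c τ * W) := by gcongr
    _ ≤ 4 * M / 3 * ((8 ^ (m + 1) * ((2 * M / 3) * Hphi φ u x r)) * W) := by
        gcongr
        exact h3.trans (by gcongr)
    _ = _ := by ring

/-- the algebraic estimate of the spatial derivative -/
lemma space_bound {u : E4 → E} (hu : ContDiff ℝ (⊤ : ℕ∞) u) (x₁ x₂ : E4) {r s : ℝ} (hr : 0 < r)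
    (hs : s ∈ Set.Icc (0:ℝ) 1)
    (h0 : ∀ y ∈ closedBall (x₁ + s • (x₂ - x₁)) r, lap u y = 0)
    (hH : 0 < Hphi φ u (x₁ + s • (x₂ - x₁)) r) (a₁ a₂ : ℝ) :
    |II φ (x₁ + s • (x₂ - x₁)) r (fun y => rad (x₁ + s • (x₂ - x₁)) u y -
        Nphi φ u (x₁ + s • (x₂ - x₁)) r • u y) (dv (x₂ - x₁) u)| ≤
      3 / 2 * (II φ (x₁ + s • (x₂ - x₁)) r (fun y => rad x₁ u y - a₁ • u y)
          (fun y => rad x₁ u y - a₁ • u y) +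
        II φ (x₁ + s • (x₂ - x₁)) r (fun y => rad x₂ u y - a₂ • u y)
          (fun y => rad x₂ u y - a₂ • u y)) := by
  set x := x₁ + s • (x₂ - x₁) with hx
  set n := Nphi φ u x r with hn
  set q := fun y => rad x u y - n • u y with hq
  set w₁ := fun y => rad x₁ u y - a₁ • u y with hw₁
  set w₂ := fun y => rad x₂ u y - a₂ • u y with hw₂
  have cu := hu.continuous
  have cr : ∀ z, Continuous (rad z u) := fun z => (rad_smooth hu z).continuous
  have cq : Continuous q := (cr x).sub (cu.const_smul n)
  have cw₁ : Continuous w₁ := (cr x₁).sub (cu.const_smul a₁)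
  have cw₂ : Continuous w₂ := (cr x₂).sub (cu.const_smul a₂)
  have cw : Continuous (fun y => w₁ y - w₂ y) := cw₁.sub cw₂
  have cd : Continuous (dv (x₂ - x₁) u) := (dv_smooth hu _).continuous
  have hqu : II φ x r q u = 0 := by
    rw [hq, II_sub_smul hφ x hr (cr x) cu cu, II_comm, II_u_rad hφ hu hr h0, ← Hphi_eq_II, hn,
      Nphi]
    field_simp
    ring
  have e1 : dv (x₂ - x₁) u = fun y => (w₁ y - w₂ y) - (a₂ - a₁) • u y := by
    funext y
    have : x₂ - x₁ = (y - x₁) - (y - x₂) := by abel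
    simp only [dv, hw₁, hw₂, rad]
    rw [this, map_sub, sub_smul]; abel
  set b : ℝ := (1 - s) * a₁ + s * a₂ - n with hb
  have e2 : ∀ y, (1 - s) • w₁ y + s • w₂ y = q y - b • u y := by
    intro y
    have : y - x = (1 - s) • (y - x₁) + s • (y - x₂) := by
      rw [hx]; module
    simp only [hw₁, hw₂, hq, rad]
    rw [this, map_add, map_smul, map_smul, hb]
    module
  have e3 : II φ x r q (dv (x₂ - x₁) u) = II φ x r q (fun y => w₁ y - w₂ y) := by
    rw [II_comm x r q, e1, II_sub_smul hφ x hr cw cu cq, II_comm x r u q, hqu,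
      II_comm x r (fun y => w₁ y - w₂ y) q]
    ring
  -- norm of q
  have e4 : II φ x r q q ≤ II φ x r w₁ w₁ + II φ x r w₂ w₂ := by
    have h1 : II φ x r (fun y => q y - b • u y) (fun y => q y - b • u y)
        = II φ x r q q + b ^ 2 * II φ x r u u := by
      have cp : Continuous fun y => q y - b • u y := cq.sub (cu.const_smul b)
      rw [II_sub_smul hφ x hr cq cu cp, II_comm x r q (fun y => q y - b • u y),
        II_comm x r u (fun y => q y - b • u y), II_sub_smul hφ x hr cq cu cq,
        II_sub_smul hφ x hr cq cu cu, II_comm x r u q, hqu]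
      ring
    have h2 : II φ x r (fun y => q y - b • u y) (fun y => q y - b • u y)
        ≤ II φ x r w₁ w₁ + II φ x r w₂ w₂ := by
      have cp : Continuous fun y => q y - b • u y := cq.sub (cu.const_smul b)
      unfold II
      rw [← integral_add (II_int hφ x hr cw₁ cw₁) (II_int hφ x hr cw₂ cw₂)]
      refine integral_mono (II_int hφ x hr cp cp)
        ((II_int hφ x hr cw₁ cw₁).add (II_int hφ x hr cw₂ cw₂)) fun y => ?_
      simp only [← e2, real_inner_self_eq_norm_sq, ← mul_add]
      refine mul_le_mul_of_nonneg_left ?_ (hφ.om_nonneg x r y)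
      have h3 : ‖(1 - s) • w₁ y + s • w₂ y‖ ≤ (1 - s) * ‖w₁ y‖ + s * ‖w₂ y‖ := by
        refine (norm_add_le _ _).trans_eq ?_
        rw [norm_smul, norm_smul, Real.norm_of_nonneg (by linarith [hs.2]),
          Real.norm_of_nonneg hs.1]
      have h4 : ‖(1 - s) • w₁ y + s • w₂ y‖ ^ 2 ≤ ((1 - s) * ‖w₁ y‖ + s * ‖w₂ y‖) ^ 2 := by
        gcongr
      have h5 : 0 ≤ s * (1 - s) := mul_nonneg hs.1 (by linarith [hs.2])
      nlinarith [mul_nonneg h5 (sq_nonneg (‖w₁ y‖ - ‖w₂ y‖)),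
        mul_nonneg hs.1 (sq_nonneg ‖w₁ y‖), mul_nonneg (sub_nonneg.2 hs.2) (sq_nonneg ‖w₂ y‖)]
    have h3 := II_nonneg hφ x r u
    nlinarith [mul_nonneg (sq_nonneg b) h3]
  have e5 : |II φ x r q (fun y => w₁ y - w₂ y)| ≤
      1 / 2 * II φ x r q q + (II φ x r w₁ w₁ + II φ x r w₂ w₂) := by
    have i1 := (II_int hφ x hr cq cq).const_mul (1 / 2)
    have i2 : Integrable (fun y => om φ x r y * ⟪w₁ y, w₁ y⟫ + om φ x r y * ⟪w₂ y, w₂ y⟫) :=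
      (II_int hφ x hr cw₁ cw₁).add (II_int hφ x hr cw₂ cw₂)
    unfold II
    rw [← integral_add (II_int hφ x hr cw₁ cw₁) (II_int hφ x hr cw₂ cw₂), ← integral_const_mul,
      ← integral_add i1 i2]
    refine abs_integral_le_integral_abs.trans ?_
    refine integral_mono (II_int hφ x hr cq cw).abs (i1.add i2) fun y => ?_
    simp only [abs_mul, abs_of_nonneg (hφ.om_nonneg x r y), Pi.add_apply,
      real_inner_self_eq_norm_sq]
    have h1 : |⟪q y, w₁ y - w₂ y⟫| ≤ ‖q y‖ * (‖w₁ y‖ + ‖w₂ y‖) :=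
      (abs_real_inner_le_norm _ _).trans (by gcongr; exact norm_sub_le _ _)
    have h2 : |⟪q y, w₁ y - w₂ y⟫| ≤ 1 / 2 * ‖q y‖ ^ 2 + (‖w₁ y‖ ^ 2 + ‖w₂ y‖ ^ 2) := by
      nlinarith [sq_nonneg (‖q y‖ - (‖w₁ y‖ + ‖w₂ y‖)), sq_nonneg (‖w₁ y‖ - ‖w₂ y‖)]
    nlinarith [mul_le_mul_of_nonneg_left h2 (hφ.om_nonneg x r y)]
  rw [e3]
  linarith

/-- the estimate for globally defined `u` -/
lemma core {M : ℝ} (hM : ∀ s, -deriv φ s ≤ M) (hM0 : 0 < M)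
    {u : E4 → E} (hu : ContDiff ℝ (⊤ : ℕ∞) u) {x₁ x₂ : E4} {r Λ : ℝ} (hr : 0 < r)
    (h0 : ∀ y ∈ ball x₁ (5 * r), lap u y = 0) (hdist : dist x₁ x₂ ≤ r / 4)
    (hH : ∀ t ∈ Set.Ioc (0:ℝ) (4 * r),
        (0 < Hphi φ u x₁ t ∧ Nphi φ u x₁ t ≤ Λ) ∧
        (0 < Hphi φ u x₂ t ∧ Nphi φ u x₂ t ≤ Λ))
    (hseg : ∀ x' ∈ segment ℝ x₁ x₂, 0 < Hphi φ u x' r)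
    {m : ℕ} (hm : 3 + 2 * Λ ≤ m + 1) :
    |Nphi φ u x₁ r - Nphi φ u x₂ r| ≤
        3 * ((4 * M / 3) * (8 ^ (m + 1) * (2 * M / 3))) * Real.sqrt Λ *
          (Real.sqrt (Nphi φ u x₁ (4 * r) - Nphi φ u x₁ (r / 4)) +
             Real.sqrt (Nphi φ u x₂ (4 * r) - Nphi φ u x₂ (r / 4))) := by
  set K : ℝ := (4 * M / 3) * (8 ^ (m + 1) * (2 * M / 3)) with hK
  have hK0 : 0 < K := by positivity
  obtain ⟨hA0, hA1, a₁, ha₁⟩ := one_centre hφ hM hM0 hu hr isOpen_ball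
    (closedBall_subset_ball (by linarith) : closedBall x₁ (4 * r) ⊆ ball x₁ (5 * r)) h0
    (fun t ht => (hH t ht).1) hm
  obtain ⟨hB0, hB1, a₂, ha₂⟩ := one_centre hφ hM hM0 hu hr isOpen_ball
    (closedBall_subset_ball' (by rw [dist_comm]; linarith) :
      closedBall x₂ (4 * r) ⊆ ball x₁ (5 * r)) h0
    (fun t ht => (hH t ht).2) hm
  set W₁ := Nphi φ u x₁ (4 * r) - Nphi φ u x₁ (r / 4)
  set W₂ := Nphi φ u x₂ (4 * r) - Nphi φ u x₂ (r / 4)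
  have hd1 : ∀ s ∈ Set.Icc (0:ℝ) 1, dist (x₁ + s • (x₂ - x₁)) x₁ ≤ r / 4 := by
    intro s hs
    rw [dist_eq_norm, add_sub_cancel_left, norm_smul, Real.norm_of_nonneg hs.1, ← dist_eq_norm,
      dist_comm]
    have := dist_nonneg (x := x₁) (y := x₂)
    nlinarith [hs.2]
  have hd2 : ∀ s ∈ Set.Icc (0:ℝ) 1, dist (x₁ + s • (x₂ - x₁)) x₂ ≤ r / 4 := by
    intro s hs
    have e : x₁ + s • (x₂ - x₁) - x₂ = (1 - s) • (x₁ - x₂) := by module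
    rw [dist_eq_norm, e, norm_smul, Real.norm_of_nonneg (by linarith [hs.2]), ← dist_eq_norm]
    have := dist_nonneg (x := x₁) (y := x₂)
    nlinarith [hs.1]
  have hh : ∀ s ∈ Set.Icc (0:ℝ) 1, ∀ y ∈ closedBall (x₁ + s • (x₂ - x₁)) r, lap u y = 0 := by
    intro s hs y hy
    refine h0 y (closedBall_subset_ball' ?_ hy)
    linarith [hd1 s hs]
  have hp : ∀ s ∈ Set.Icc (0:ℝ) 1, 0 < Hphi φ u (x₁ + s • (x₂ - x₁)) r := by
    intro s hs
    refine hseg _ ?_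
    rw [segment_eq_image']
    exact ⟨s, hs, rfl⟩
  have hderiv : ∀ s ∈ Set.Icc (0:ℝ) 1, HasDerivAt
      (fun s : ℝ => Nphi φ u (x₁ + s • (x₂ - x₁)) r) _ s := fun s hs =>
    N_deriv_space hφ hu x₁ (x₂ - x₁) hr s (hh s hs) (hp s hs)
  have hmv := norm_image_sub_le_of_norm_deriv_le_segment_01' (C := 3 * K * (W₁ + W₂))
    (fun s hs => (hderiv s hs).hasDerivWithinAt) ?_
  · have hlin : |Nphi φ u x₁ r - Nphi φ u x₂ r| ≤ 3 * K * (W₁ + W₂) := by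
      rw [abs_sub_comm]
      simpa using hmv
    have hq : ∀ W : ℝ, 0 ≤ W → W ≤ Λ → W ≤ Real.sqrt Λ * Real.sqrt W := by
      intro W h1 h2
      calc W = Real.sqrt W * Real.sqrt W := (Real.mul_self_sqrt h1).symm
        _ ≤ _ := by gcongr
    calc _ ≤ 3 * K * (W₁ + W₂) := hlin
      _ ≤ 3 * K * (Real.sqrt Λ * Real.sqrt W₁ + Real.sqrt Λ * Real.sqrt W₂) := by
          gcongr
          · exact hq _ hA0 hA1
          · exact hq _ hB0 hB1
      _ = _ := by ring
  · intro s hs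
    have hs' : s ∈ Set.Icc (0:ℝ) 1 := ⟨hs.1, hs.2.le⟩
    have h1 := space_bound hφ hu x₁ x₂ hr hs' (hh s hs') (hp s hs') a₁ a₂
    have h2 := ha₁ _ (hd1 s hs') (hh s hs')
    have h3 := ha₂ _ (hd2 s hs') (hh s hs')
    have hps := hp s hs'
    rw [Real.norm_eq_abs, abs_mul, abs_of_pos (by positivity), div_mul_eq_mul_div,
      div_le_iff₀ hps]
    rw [← hK] at h2 h3
    have e : 3 * K * (W₁ + W₂) * Hphi φ u (x₁ + s • (x₂ - x₁)) r =
        3 * (K * Hphi φ u (x₁ + s • (x₂ - x₁)) r * W₁ +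
          K * Hphi φ u (x₁ + s • (x₂ - x₁)) r * W₂) := by ring
    rw [e]
    linarith

end

/-! ### Localisation and conclusion -/

lemma Nphi_congr {φ : ℝ → ℝ} (hφ : Cut φ) {u v : E4 → E} {U : Set E4} (hU : IsOpen U)
    (huv : ∀ y ∈ U, v y = u y) {x : E4} {t : ℝ} (ht : 0 < t) (hx : closedBall x t ⊆ U) :
    Hphi φ v x t = Hphi φ u x t ∧ Nphi φ v x t = Nphi φ u x t := by
  have h1 : Hphi φ v x t = Hphi φ u x t := by
    rw [Hphi_eq, Hphi_eq]
    congr 1; funext y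
    by_cases h : om φ x t y = 0
    · rw [h, zero_mul, zero_mul]
    · have : y ∈ closedBall x t := by
        rw [mem_closedBall, dist_eq_norm]; exact (hφ.om_supp ht h).2
      rw [huv y (hx this)]
  have h2 : Dphi φ v x t = Dphi φ u x t := by
    rw [Dphi_eq, Dphi_eq]
    congr 1; funext y
    by_cases h : Ph φ x t y = 0
    · rw [h, zero_mul, zero_mul]
    · have : y ∈ closedBall x t := by
        rw [mem_closedBall, dist_eq_norm]; exact (hφ.Ph_supp ht h).le
      have he : v =ᶠ[nhds y] u := by
        filter_upwards [hU.mem_nhds (hx this)] with z hz using huv z hz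
      rw [gradSq, gradSq, he.fderiv_eq]
  exact ⟨h1, by rw [Nphi, Nphi, h1, h2]⟩

lemma exists_ext {u : E4 → E} {Ω : Set E4} (hΩ : IsOpen Ω) (hu : IsHarmonicOn u Ω)
    {x : E4} {r : ℝ} (hr : 0 < r) (hx : closedBall x (6 * r) ⊆ Ω) :
    ∃ v : E4 → E, ContDiff ℝ (⊤ : ℕ∞) v ∧ (∀ y ∈ ball x (5 * r), v y = u y) ∧
      ∀ y ∈ ball x (5 * r), lap v y = 0 := by
  let χ : ContDiffBump x := ⟨5 * r, 6 * r, by positivity, by linarith⟩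
  have hv : ContDiff ℝ (⊤ : ℕ∞) (fun y => χ y • u y) := by
    rw [contDiff_iff_contDiffAt]
    intro y
    by_cases hy : y ∈ Ω
    · exact χ.contDiff.contDiffAt.smul (hu.1.contDiffAt (hΩ.mem_nhds hy))
    · have hy' : y ∈ (closedBall x (6 * r))ᶜ := fun h => hy (hx h)
      have : (fun y => χ y • u y) =ᶠ[nhds y] fun _ => (0 : E) := by
        filter_upwards [isClosed_closedBall.isOpen_compl.mem_nhds hy'] with z hz
        have : χ z = 0 := χ.zero_of_le_dist (by
          rw [Set.mem_compl_iff, mem_closedBall, not_le] at hz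
          exact hz.le)
        rw [this, zero_smul]
      exact contDiffAt_const.congr_of_eventuallyEq this
  have he : ∀ y ∈ ball x (5 * r), χ y • u y = u y := by
    intro y hy
    rw [χ.one_of_mem_closedBall (ball_subset_closedBall hy), one_smul]
  refine ⟨fun y => χ y • u y, hv, he, fun y hy => ?_⟩
  rw [lap_eq_iter hv]
  have h1 : (fun y => χ y • u y) =ᶠ[nhds y] u := by
    filter_upwards [isOpen_ball.mem_nhds hy] with z hz using he z hz
  rw [h1.iteratedFDeriv ℝ 2 |>.eq_of_nhds]
  exact hu.2 y (hx (closedBall_subset_closedBall (by linarith) (ball_subset_closedBall hy)))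

/-- Flat-case analogue of Corollary 6.3: the pointwise frequency pinching estimate.
Here `W_{r/4}^{4r}(x) = N_φ(x,4r) − N_φ(x,r/4)`. -/
theorem stmt_19 (φ : ℝ → ℝ) (hφs : ContDiff ℝ (⊤ : ℕ∞) φ) (hφa : Antitone φ)
    (hφ1 : ∀ t ≤ (3/4 : ℝ), φ t = 1) (hφ0 : ∀ t, (1:ℝ) ≤ t → φ t = 0)
    (Λ : ℝ) (hΛ : 0 < Λ) :
    ∃ C > (0:ℝ),
      ∀ (F : Type) [NormedAddCommGroup F] [InnerProductSpace ℝ F] [FiniteDimensional ℝ F],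
      ∀ (u : E4 → F) (Ω : Set E4), IsOpen Ω → IsHarmonicOn u Ω →
      ∀ (r : ℝ), 0 < r → ∀ x₁ x₂ : E4, dist x₁ x₂ ≤ r / 4 →
      closedBall x₁ (6 * r) ⊆ Ω →
      (∀ t ∈ Set.Ioc (0:ℝ) (4 * r),
        (0 < Hphi φ u x₁ t ∧ Nphi φ u x₁ t ≤ Λ) ∧
        (0 < Hphi φ u x₂ t ∧ Nphi φ u x₂ t ≤ Λ)) →
      (∀ x' ∈ segment ℝ x₁ x₂, 0 < Hphi φ u x' r) →
      |Nphi φ u x₁ r - Nphi φ u x₂ r| ≤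
        C * (Real.sqrt (Nphi φ u x₁ (4 * r) - Nphi φ u x₁ (r / 4)) +
             Real.sqrt (Nphi φ u x₂ (4 * r) - Nphi φ u x₂ (r / 4))) := by
  have hφ : Cut φ := ⟨hφs, hφa, hφ1, hφ0⟩
  obtain ⟨M, hM0, hM⟩ := hφ.exists_bound
  obtain ⟨m, hm'⟩ := exists_nat_ge (3 + 2 * Λ)
  have hm : 3 + 2 * Λ ≤ (m : ℝ) + 1 := by linarith
  refine ⟨3 * ((4 * M / 3) * (8 ^ (m + 1) * (2 * M / 3))) * Real.sqrt Λ,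
    mul_pos (by positivity) (Real.sqrt_pos.2 hΛ), ?_⟩
  intro F _ _ _ u Ω hΩ hu r hr x₁ x₂ hdist hball hH hseg
  obtain ⟨v, hv, hvu, hv0⟩ := exists_ext hΩ hu hr hball
  have key : ∀ x t, dist x x₁ ≤ r / 4 → 0 < t → t ≤ 4 * r →
      Hphi φ v x t = Hphi φ u x t ∧ Nphi φ v x t = Nphi φ u x t := fun x t hx ht ht' =>
    Nphi_congr hφ isOpen_ball hvu ht (closedBall_subset_ball' (by linarith))
  have hx1 : dist x₁ x₁ ≤ r / 4 := by rw [dist_self]; positivity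
  have hx2 : dist x₂ x₁ ≤ r / 4 := by rwa [dist_comm]
  have hc := core hφ hM hM0 hv hr hv0 hdist (Λ := Λ) ?_ ?_ hm
  · rwa [(key x₁ r hx1 hr (by linarith)).2, (key x₂ r hx2 hr (by linarith)).2,
      (key x₁ (4 * r) hx1 (by linarith) le_rfl).2, (key x₂ (4 * r) hx2 (by linarith) le_rfl).2,
      (key x₁ (r / 4) hx1 (by linarith) (by linarith)).2,
      (key x₂ (r / 4) hx2 (by linarith) (by linarith)).2] at hc
  · intro t ht
    rw [(key x₁ t hx1 ht.1 ht.2).1, (key x₁ t hx1 ht.1 ht.2).2,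
      (key x₂ t hx2 ht.1 ht.2).1, (key x₂ t hx2 ht.1 ht.2).2]
    exact hH t ht
  · intro x' hx'
    have hsub : segment ℝ x₁ x₂ ⊆ closedBall x₁ (r / 4) :=
      (convex_closedBall x₁ (r / 4)).segment_subset (mem_closedBall.2 hx1) (mem_closedBall.2 hx2)
    rw [(key x' r (mem_closedBall.1 (hsub hx')) hr (by linarith)).1]
    exact hseg x' hx'
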